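/- Let α, β, a, b be integers with α ≥ β ≥ 1, a ≤ 0, b ≤ 0 and a·b > α·(β + 1). Then the topological index of the BB(ᾱ, β̄, a, b) code, with f = 1 + x + x^{-α} y^{b} and g = 1 + y + y^{-β} x^{a} in R, is Q = dim_{F₂} R ⧸ (f, g) = a·b − α·β + 1. -/

import Mathlib

noncomputable section

/-- The Laurent polynomial ring `F₂[x^±, y^±]` as a group algebra. -/
abbrev LaurentR : Type := AddMonoidAlgebra (ZMod 2) (ℤ × ℤ)

/-- The monomial `x^i y^j`. -/
def mono (i j : ℤ) : LaurentR := AddMonoidAlgebra.single (i, j) 1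

/-- The BB polynomial `f = 1 + x + x^{-α} y^{b}`. -/
def fBB (α b : ℤ) : LaurentR := 1 + mono 1 0 + mono (-α) b

/-- The BB polynomial `g = 1 + y + y^{-β} x^{a}`. -/
def gBB (β a : ℤ) : LaurentR := 1 + mono 0 1 + mono a (-β)

open Module in
theorem bijective_of_sub_mem_span_lt {K V ι : Type*} [Field K] [AddCommGroup V] [Module K V]
    (b : Basis ι K V) (deg : ι → ℕ) (T : V →ₗ[K] V)
    (hT : ∀ k, b k - T (b k) ∈ Submodule.span K (b '' {l | deg l < deg k})) :
    Function.Bijective T := by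
  set W : ℕ → Submodule K V := fun d => Submodule.span K (b '' {l | deg l < d}) with hW
  have step : ∀ d, ∀ v ∈ W (d + 1), v - T v ∈ W d := by
    intro d v hv
    have : W (d + 1) ≤ (W d).comap (LinearMap.id - T) := by
      refine Submodule.span_le.2 ?_
      rintro _ ⟨k, hk, rfl⟩
      refine Submodule.span_mono (Set.image_mono fun l hl => ?_) (hT k)
      simp only [Set.mem_ofPred_eq] at hk hl ⊢
      omega
    exact this hv
  have zero : W 0 = ⊥ := by simp [hW]
  have exhaust : ∀ v, ∃ d, v ∈ W d := by
    intro v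
    have hmono : Monotone W := fun p q hpq =>
      Submodule.span_mono (Set.image_mono fun l (hl : deg l < p) => hl.trans_le hpq)
    induction b.mem_span v using Submodule.span_induction with
    | zero => exact ⟨0, zero_mem _⟩
    | mem v hv =>
      obtain ⟨k, rfl⟩ := hv
      exact ⟨deg k + 1, Submodule.subset_span ⟨k, Nat.lt_succ_self _, rfl⟩⟩
    | add u v _ _ hu hv =>
      obtain ⟨d, hd⟩ := hu
      obtain ⟨e, he⟩ := hv
      exact ⟨max d e, add_mem (hmono (le_max_left d e) hd) (hmono (le_max_right d e) he)⟩
    | smul c v _ hv => exact hv.imp fun d hd => (W d).smul_mem c hd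
  constructor
  · rw [injective_iff_map_eq_zero]
    intro v hv
    obtain ⟨d, hd⟩ := exhaust v
    induction d with
    | zero => simpa [zero] using hd
    | succ d ih => exact ih (by simpa [hv] using step d v hd)
  · intro v
    obtain ⟨d, hd⟩ := exhaust v
    induction d generalizing v with
    | zero => exact ⟨0, by simpa [zero, eq_comm] using hd⟩
    | succ d ih =>
      obtain ⟨u, hu⟩ := ih _ (step d v hd)
      exact ⟨v + u, by simp [hu]⟩

open Module in
theorem finrank_quotient_span_image_basis {K V ι : Type*} [Field K] [AddCommGroup V] [Module K V]
    (b : Basis ι K V) (s : Set ι) [Finite ↥sᶜ] :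
    finrank K (V ⧸ Submodule.span K (b '' s)) = Nat.card ↥sᶜ := by
  have h : IsCompl (Submodule.span K (b '' s)) (Submodule.span K (b '' sᶜ)) := by
    refine ⟨b.linearIndependent.disjoint_span_image disjoint_compl_right, ?_⟩
    rw [codisjoint_iff, ← Submodule.span_union, ← Set.image_union, Set.union_compl_self,
      Set.image_univ, b.span_eq]
  have := Fintype.ofFinite ↥sᶜ
  rw [(Submodule.quotientEquivOfIsCompl _ _ h).finrank_eq, Set.image_eq_range,
    Nat.card_eq_fintype_card]
  exact finrank_span_eq_card (b.linearIndependent.comp _ Subtype.val_injective)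

open Module in
/-- If a linear map sends each basis vector `b i` to `b (σ i)` plus terms of smaller degree, with
`σ` injective, then its cokernel has dimension the number of indices missed by `σ`. -/
theorem finrank_quotient_range_of_triangular {K V ι : Type*} [Field K] [AddCommGroup V]
    [Module K V] (b : Basis ι K V) (deg : ι → ℕ) (σ : ι → ι) (hσ : Function.Injective σ)
    [Finite ↥(Set.range σ)ᶜ] (M : V →ₗ[K] V)
    (hM : ∀ i, b (σ i) - M (b i) ∈ Submodule.span K (b '' {l | deg l < deg (σ i)})) :
    finrank K (V ⧸ LinearMap.range M) = Nat.card ↥(Set.range σ)ᶜ := by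
  classical
  set T : V →ₗ[K] V := b.constr K fun k => if h : ∃ i, σ i = k then M (b h.choose) else b k
  have hTσ : ∀ i, T (b (σ i)) = M (b i) := by
    intro i
    have h : ∃ j, σ j = σ i := ⟨i, rfl⟩
    rw [b.constr_basis, dif_pos h, hσ h.choose_spec]
  have hT : Function.Bijective T := by
    refine bijective_of_sub_mem_span_lt b deg T fun k => ?_
    by_cases h : ∃ i, σ i = k
    · obtain ⟨i, rfl⟩ := h
      rw [hTσ]
      exact hM i
    · rw [b.constr_basis, dif_neg h, sub_self]
      exact zero_mem _
  set c := b.map (LinearEquiv.ofBijective T hT)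
  have hrange : LinearMap.range M = Submodule.span K (c '' Set.range σ) := by
    rw [← Set.range_comp, LinearMap.range_eq_map, ← b.span_eq, Submodule.map_span,
      ← Set.range_comp]
    congr 2
    ext i
    simp [c, hTσ]
  rw [hrange, finrank_quotient_span_image_basis]

theorem pow_mul_pow_mem_span_basis {K E : Type*} [Field K] [CommRing E] [Algebra K E] {B : ℕ}
    (hB : 1 ≤ B) (b : Module.Basis (ℕ × Fin B) K E) (t w : E)
    (hb : ∀ p, b p = t ^ p.1 * w ^ (p.2 : ℕ)) (hw : w ^ B = t ^ B + 1) (i k d : ℕ)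
    (h : i + k < d) :
    t ^ i * w ^ k ∈ Submodule.span K (b '' {p | p.1 + p.2 < d}) := by
  induction k using Nat.strong_induction_on generalizing i with
  | _ k ih =>
    by_cases hk : k < B
    · exact Submodule.subset_span ⟨(i, ⟨k, hk⟩), h, hb _⟩
    · obtain ⟨l, rfl⟩ := Nat.exists_eq_add_of_le (not_lt.1 hk)
      have : t ^ i * w ^ (B + l) = t ^ (i + B) * w ^ l + t ^ i * w ^ l := by
        rw [pow_add, hw]
        ring
      rw [this]
      exact add_mem (ih l (by omega) _ (by omega)) (ih l (by omega) _ (by omega))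

theorem finrank_quotient_span_fermat {K E : Type*} [Field K] [CommRing E] [Algebra K E]
    {B : ℕ} (hB : 1 ≤ B) (b : Module.Basis (ℕ × Fin B) K E) (t w : E)
    (hb : ∀ p, b p = t ^ p.1 * w ^ (p.2 : ℕ)) (hw : w ^ B = t ^ B + 1) (α β m : ℕ)
    (hm : β < m + α) :
    Module.finrank K (E ⧸ Ideal.span {w ^ (β + 1) + t ^ m + t ^ (m + α) * w}) =
      B * (m + α + 1) := by
  set H := w ^ (β + 1) + t ^ m + t ^ (m + α) * w with hH
  set c := m + α with hc
  set σ : ℕ × Fin B → ℕ × Fin B := fun p =>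
    if h : (p.2 : ℕ) + 1 < B then (p.1 + c, ⟨p.2 + 1, h⟩) else (p.1 + c + B, ⟨0, hB⟩) with hσ
  have hσ_inj : Function.Injective σ := by
    rintro ⟨i, j, hj⟩ ⟨k, l, hl⟩ h
    simp only [hσ] at h
    split_ifs at h <;> simp only [Prod.mk.injEq, Fin.mk.injEq] at h ⊢ <;> omega
  have hcompl : (Set.range σ)ᶜ = ((Finset.range c ×ˢ Finset.univ ∪
      Finset.Ico c (c + B) ×ˢ {⟨0, hB⟩} : Finset (ℕ × Fin B)) : Set (ℕ × Fin B)) := by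
    ext ⟨i, j, hj⟩
    simp only [Set.mem_compl_iff, Set.mem_range, Finset.coe_union, Finset.coe_product,
      Set.mem_union, Set.mem_prod, Finset.mem_coe, Finset.mem_range, Finset.mem_univ, and_true,
      Finset.mem_Ico, Finset.mem_singleton, Fin.mk.injEq]
    constructor
    · intro h
      by_contra! hcon
      obtain ⟨h1, h2⟩ := hcon
      by_cases hj0 : j = 0
      · refine h ⟨(i - c - B, ⟨B - 1, by omega⟩), ?_⟩
        have : c + B ≤ i := by
          by_contra hlt
          exact h2 ⟨h1, by omega⟩ hj0
        simp only [hσ]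
        rw [dif_neg (by omega)]
        simp only [Prod.mk.injEq, Fin.mk.injEq]
        omega
      · refine h ⟨(i - c, ⟨j - 1, by omega⟩), ?_⟩
        simp only [hσ]
        rw [dif_pos (by omega)]
        simp only [Prod.mk.injEq, Fin.mk.injEq]
        omega
    · rintro h ⟨⟨k, l, hl⟩, hkl⟩
      simp only [hσ] at hkl
      split_ifs at hkl <;> simp only [Prod.mk.injEq, Fin.mk.injEq] at hkl <;> omega
  have hcard : Nat.card ↥(Set.range σ)ᶜ = B * (c + 1) := by
    rw [hcompl, Nat.card_coe_set_eq, Set.ncard_coe_finset, Finset.card_union_of_disjoint]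
    · simp
      ring
    · rw [Finset.disjoint_left]
      rintro ⟨i, j⟩
      simp
      omega
  have : Finite ↥(Set.range σ)ᶜ := by
    rw [hcompl]
    exact Finset.finite_toSet _
  have hrange : LinearMap.range (LinearMap.mulLeft K H) =
      (Ideal.span {H}).restrictScalars K := by
    ext v
    simp [Ideal.mem_span_singleton, dvd_def, eq_comm]
  rw [← hcard, ← finrank_quotient_range_of_triangular b (fun p => p.1 + p.2) σ hσ_inj
    (LinearMap.mulLeft K H), hrange]
  · exact (Submodule.Quotient.restrictScalarsEquiv K (Ideal.span {H})).finrank_eq.symm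
  · rintro ⟨i, j, hj⟩
    have mem := pow_mul_pow_mem_span_basis hB b t w hb hw
    rw [LinearMap.mulLeft_apply, hb, hb]
    simp only [hσ]
    split_ifs with h
    · have : t ^ (i + c) * w ^ (j + 1) - H * (t ^ i * w ^ j) =
          -(t ^ i * w ^ (j + β + 1) + t ^ (i + m) * w ^ j) := by
        rw [hH]
        ring
      rw [this]
      exact neg_mem (add_mem (mem _ _ _ (by dsimp only; omega)) (mem _ _ _ (by dsimp only; omega)))
    · obtain rfl : B = j + 1 := by omega
      have : t ^ (i + c + (j + 1)) * w ^ 0 - H * (t ^ i * w ^ j) =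
          -(t ^ i * w ^ (j + β + 1) + t ^ (i + m) * w ^ j + t ^ (i + c) * w ^ 0) := by
        have : t ^ (i + c) * w ^ (j + 1) = t ^ (i + c) * (t ^ (j + 1) + 1) := by rw [hw]
        rw [hH]
        linear_combination -this
      rw [this]
      exact neg_mem (add_mem (add_mem (mem _ _ _ (by dsimp only; omega))
        (mem _ _ _ (by dsimp only; omega))) (mem _ _ _ (by dsimp only; omega)))

open Polynomial in
/-- The affine Fermat curve `w ^ B = t ^ B + 1` as a monic polynomial in `w` over `F₂[t]`. -/
def fermatPoly (B : ℕ) : (ZMod 2)[X][X] := X ^ B - C (X ^ B + 1)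

open Polynomial in
theorem exists_basis_adjoinRoot_fermatPoly {B : ℕ} (hB : 1 ≤ B) :
    ∃ b : Module.Basis (ℕ × Fin B) (ZMod 2) (AdjoinRoot (fermatPoly B)),
      ∀ p, b p = (AdjoinRoot.of (fermatPoly B) X) ^ p.1 *
        (AdjoinRoot.root (fermatPoly B)) ^ (p.2 : ℕ) := by
  have hmonic : (fermatPoly B).Monic := monic_X_pow_sub_C _ (by omega)
  have hdeg : (fermatPoly B).natDegree = B := natDegree_X_pow_sub_C
  let b := ((Polynomial.basisMonomials (ZMod 2)).smulTower
    (AdjoinRoot.powerBasis' hmonic).basis).reindex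
      ((Equiv.refl ℕ).prodCongr (finCongr hdeg))
  refine ⟨b, fun p => ?_⟩
  simp only [b, Module.Basis.reindex_apply, Module.Basis.smulTower_apply, PowerBasis.coe_basis]
  simp [Algebra.smul_def, AdjoinRoot.powerBasis', ← X_pow_eq_monomial]
  rfl

open Polynomial in
theorem eval₂_fermatPoly {A : Type*} [CommRing A] (φ : (ZMod 2)[X] →+* A) (v : A) (B : ℕ) :
    (fermatPoly B).eval₂ φ v = v ^ B - (φ X ^ B + 1) := by
  rw [fermatPoly, eval₂_sub, eval₂_X_pow, eval₂_C, map_add, map_pow, map_one]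

open Polynomial in
theorem root_fermatPoly_pow (B : ℕ) :
    AdjoinRoot.root (fermatPoly B) ^ B = AdjoinRoot.of (fermatPoly B) X ^ B + 1 := by
  rw [← sub_eq_zero, ← eval₂_fermatPoly, AdjoinRoot.eval₂_root]

/-- The monomial `x` as a unit. -/
def xUnit : LaurentRˣ where
  val := mono 1 0
  inv := mono (-1) 0
  val_inv := by simp [mono, AddMonoidAlgebra.single_mul_single, AddMonoidAlgebra.one_def, Prod.zero_eq_mk]
  inv_val := by simp [mono, AddMonoidAlgebra.single_mul_single, AddMonoidAlgebra.one_def, Prod.zero_eq_mk]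

/-- The monomial `y` as a unit. -/
def yUnit : LaurentRˣ where
  val := mono 0 1
  inv := mono 0 (-1)
  val_inv := by simp [mono, AddMonoidAlgebra.single_mul_single, AddMonoidAlgebra.one_def, Prod.zero_eq_mk]
  inv_val := by simp [mono, AddMonoidAlgebra.single_mul_single, AddMonoidAlgebra.one_def, Prod.zero_eq_mk]

theorem mono_mul_mono (i j k l : ℤ) : mono i j * mono k l = mono (i + k) (j + l) := by
  simp [mono, AddMonoidAlgebra.single_mul_single]

theorem coe_xUnit_zpow (i : ℤ) : ((xUnit ^ i : LaurentRˣ) : LaurentR) = mono i 0 := by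
  induction i with
  | zero => rfl
  | succ i ih =>
    rw [zpow_add_one, Units.val_mul, ih]
    exact mono_mul_mono _ _ _ _
  | pred i ih =>
    rw [zpow_sub_one, Units.val_mul, ih]
    exact mono_mul_mono _ _ _ _

theorem coe_yUnit_zpow (j : ℤ) : ((yUnit ^ j : LaurentRˣ) : LaurentR) = mono 0 j := by
  induction j with
  | zero => rfl
  | succ j ih =>
    rw [zpow_add_one, Units.val_mul, ih]
    exact mono_mul_mono _ _ _ _
  | pred j ih =>
    rw [zpow_sub_one, Units.val_mul, ih]
    exact mono_mul_mono _ _ _ _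

theorem mono_eq_zpow (i j : ℤ) : mono i j = ((xUnit ^ i * yUnit ^ j : LaurentRˣ) : LaurentR) := by
  rw [Units.val_mul, coe_xUnit_zpow, coe_yUnit_zpow, mono_mul_mono, add_zero, zero_add]

theorem map_mono {A : Type*} [CommRing A] (φ : LaurentR →+* A) (u v : Aˣ)
    (hu : φ (mono 1 0) = u) (hv : φ (mono 0 1) = v) (i j : ℤ) :
    φ (mono i j) = ((u ^ i * v ^ j : Aˣ) : A) := by
  have hu' : Units.map (φ : LaurentR →* A) xUnit = u := Units.ext hu
  have hv' : Units.map (φ : LaurentR →* A) yUnit = v := Units.ext hv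
  rw [mono_eq_zpow, ← hu', ← hv', ← map_zpow, ← map_zpow, ← map_mul]
  rfl

/-- Evaluation of Laurent polynomials at a pair of units. -/
def laurentEval {A : Type*} [CommRing A] [Algebra (ZMod 2) A] (u v : Aˣ) :
    LaurentR →ₐ[ZMod 2] A :=
  AddMonoidAlgebra.lift (ZMod 2) A (ℤ × ℤ)
    { toFun p := ((u ^ p.toAdd.1 * v ^ p.toAdd.2 : Aˣ) : A)
      map_one' := by simp
      map_mul' p q := by
        rw [← Units.val_mul, toAdd_mul, Prod.fst_add, Prod.snd_add, zpow_add, zpow_add,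
          mul_mul_mul_comm] }

theorem laurentEval_mono {A : Type*} [CommRing A] [Algebra (ZMod 2) A] (u v : Aˣ) (i j : ℤ) :
    laurentEval u v (mono i j) = ((u ^ i * v ^ j : Aˣ) : A) := by
  simp [laurentEval, mono]

theorem laurent_algHom_ext {A : Type*} [CommRing A] [Algebra (ZMod 2) A]
    {φ ψ : LaurentR →ₐ[ZMod 2] A} (hx : φ (mono 1 0) = ψ (mono 1 0))
    (hy : φ (mono 0 1) = ψ (mono 0 1)) : φ = ψ := by
  refine AddMonoidAlgebra.algHom_ext (fun p => ?_) (Subsingleton.elim _ _)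
  have hφ := map_mono φ.toRingHom (Units.map (φ : LaurentR →* A) xUnit)
    (Units.map (φ : LaurentR →* A) yUnit) rfl rfl p.1 p.2
  have hψ := map_mono ψ.toRingHom (Units.map (φ : LaurentR →* A) xUnit)
    (Units.map (φ : LaurentR →* A) yUnit) hx.symm hy.symm p.1 p.2
  exact hφ.trans hψ.symm

/-- After the monomial substitution `x = t ^ B`, `y = t ^ (-α) w⁻¹` the first relation
becomes the equation of a Fermat curve. -/
theorem fBB_relation_iff {A : Type*} [CommRing A] [Algebra (ZMod 2) A] (t w : Aˣ) (α B : ℕ) :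
    (1 + (t ^ B : Aˣ) + (((t ^ B) ^ (-(α : ℤ)) * (t ^ (-(α : ℤ)) * w⁻¹) ^ (-(B : ℤ)) : Aˣ) : A) = 0)
      ↔ (w : A) ^ B = t ^ B + 1 := by
  have h : (t ^ B) ^ (-(α : ℤ)) * (t ^ (-(α : ℤ)) * w⁻¹) ^ (-(B : ℤ)) = w ^ B := by
    rw [mul_zpow, ← zpow_natCast t B, ← zpow_mul, ← zpow_mul, ← mul_assoc, ← zpow_add]
    rw [show (B : ℤ) * -(α : ℤ) + -(α : ℤ) * -(B : ℤ) = 0 by ring]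
    simp
  have h2 : (2 : A) = 0 := by
    rw [← map_ofNat (algebraMap (ZMod 2) A) 2, show (OfNat.ofNat 2 : ZMod 2) = 0 by decide,
      map_zero]
  rw [h, Units.val_pow_eq_pow_val, Units.val_pow_eq_pow_val]
  constructor <;> intro hrel
  · linear_combination hrel - ((t : A) ^ B + 1) * h2
  · linear_combination hrel + ((t : A) ^ B + 1) * h2

theorem gBB_relation_iff {A : Type*} [CommRing A] [Algebra (ZMod 2) A] (t w : Aˣ)
    (α β a B m : ℕ) (hm : a * B = m + α * (β + 1)) :
    (1 + (t ^ (-(α : ℤ)) * w⁻¹ : Aˣ) +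
        (((t ^ B) ^ (-(a : ℤ)) * (t ^ (-(α : ℤ)) * w⁻¹) ^ (-(β : ℤ)) : Aˣ) : A) = 0)
      ↔ (w : A) ^ (β + 1) + t ^ m + t ^ (m + α) * w = 0 := by
  have h1 : t ^ (m + α) * w * (t ^ (-(α : ℤ)) * w⁻¹) = t ^ m := by
    rw [mul_mul_mul_comm, mul_inv_cancel, mul_one, ← zpow_natCast, ← zpow_add, ← zpow_natCast]
    congr 1
    push_cast
    ring
  have h2 : t ^ (m + α) * w * ((t ^ B) ^ (-(a : ℤ)) * (t ^ (-(α : ℤ)) * w⁻¹) ^ (-(β : ℤ))) =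
      w ^ (β + 1) := by
    have he : ((m + α : ℕ) : ℤ) + ((B : ℤ) * -(a : ℤ) + -(α : ℤ) * -(β : ℤ)) = 0 := by
      have : (a : ℤ) * B = m + α * (β + 1) := by exact_mod_cast hm
      push_cast
      linear_combination -this
    rw [mul_zpow, ← zpow_natCast t B, ← zpow_mul, ← zpow_mul, ← mul_assoc (t ^ _) (t ^ _),
      ← zpow_add, mul_mul_mul_comm, ← zpow_natCast t, ← zpow_add, he, inv_zpow', neg_neg,
      zpow_natCast, zpow_zero, one_mul, pow_succ']
  rw [← (t ^ (m + α) * w).isUnit.mul_right_eq_zero, mul_add, mul_add, ← Units.val_mul,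
    ← Units.val_mul, h1, h2]
  push_cast
  rw [mul_one, add_assoc, add_comm, add_comm ((t : A) ^ m)]

theorem fermat_units {A : Type*} [CommRing A] {t w : A} {α β B m : ℕ} (hB : 1 ≤ B) (hm : 1 ≤ m)
    (hw : w ^ B = t ^ B + 1) (hH : w ^ (β + 1) + t ^ m + t ^ (m + α) * w = 0) :
    IsUnit t ∧ IsUnit w := by
  have ht : IsUnit t := by
    have h1 : t ∣ w ^ (β + 1) := by
      have : w ^ (β + 1) = -(t ^ m * (1 + t ^ α * w)) := by linear_combination hH
      rw [this]
      exact ((dvd_pow_self t (by omega)).mul_right _).neg_right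
    have h2 : t ∣ (t ^ B + 1) ^ (β + 1) := by
      rw [← hw, ← pow_mul, mul_comm, pow_mul]
      exact h1.trans (dvd_pow_self _ (by omega))
    have h3 : t ∣ (t ^ B + 1) ^ (β + 1) - 1 := by
      have := sub_dvd_pow_sub_pow (t ^ B + 1) 1 (β + 1)
      rw [add_sub_cancel_right, one_pow] at this
      exact (dvd_pow_self t (by omega)).trans this
    exact isUnit_of_dvd_one (by simpa using dvd_sub h2 h3)
  refine ⟨ht, isUnit_of_dvd_unit ⟨-(w ^ β + t ^ (m + α)), ?_⟩ (ht.pow m)⟩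
  linear_combination hH

open Polynomial in
/-- Adjoining a `B`-th root of `x` to the quotient by the BB polynomials gives the coordinate ring
of a zero-dimensional subscheme of the affine Fermat curve. -/
theorem nonempty_algEquiv_adjoinRoot_fermat {α β a B m : ℕ} (hB : 1 ≤ B) (hm : 1 ≤ m)
    (hexp : a * B = m + α * (β + 1)) :
    Nonempty (AdjoinRoot (X ^ B - C (Ideal.Quotient.mk
        (Ideal.span ({fBB α (-B), gBB β (-a)} : Set LaurentR)) (mono 1 0))) ≃ₐ[ZMod 2]
      AdjoinRoot (fermatPoly B) ⧸ Ideal.span {AdjoinRoot.root (fermatPoly B) ^ (β + 1) +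
        AdjoinRoot.of (fermatPoly B) X ^ m +
        AdjoinRoot.of (fermatPoly B) X ^ (m + α) * AdjoinRoot.root (fermatPoly B)}) := by
  set I := Ideal.span ({fBB α (-B), gBB β (-a)} : Set LaurentR) with hI
  set p : (LaurentR ⧸ I)[X] := X ^ B - C (Ideal.Quotient.mk I (mono 1 0)) with hp
  set tE := AdjoinRoot.of (fermatPoly B) X with htE
  set wE := AdjoinRoot.root (fermatPoly B) with hwE
  set J := Ideal.span {wE ^ (β + 1) + tE ^ m + tE ^ (m + α) * wE} with hJ
  have hwE_pow : Ideal.Quotient.mk J wE ^ B = Ideal.Quotient.mk J tE ^ B + 1 := by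
    simpa using congrArg (Ideal.Quotient.mk J) (root_fermatPoly_pow B)
  have hHE : Ideal.Quotient.mk J wE ^ (β + 1) + Ideal.Quotient.mk J tE ^ m +
      Ideal.Quotient.mk J tE ^ (m + α) * Ideal.Quotient.mk J wE = 0 := by
    simp only [← map_pow, ← map_mul, ← map_add]
    exact Ideal.Quotient.eq_zero_iff_mem.2 (Ideal.mem_span_singleton_self _)
  obtain ⟨⟨t, ht⟩, ⟨w, hw⟩⟩ := fermat_units hB hm hwE_pow hHE
  rw [← ht, ← hw] at hwE_pow hHE
  let ev := laurentEval (t ^ B) (t ^ (-(α : ℤ)) * w⁻¹)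
  have hev : ∀ r ∈ I, ev r = 0 := by
    have : I ≤ RingHom.ker ev := by
      rw [hI, Ideal.span_le]
      rintro _ (rfl | rfl)
      · have := (fBB_relation_iff t w α B).2 hwE_pow
        simpa [ev, fBB, laurentEval_mono, RingHom.mem_ker] using this
      · have := (gBB_relation_iff t w α β a B m hexp).2 hHE
        simpa [ev, gBB, laurentEval_mono, RingHom.mem_ker] using this
    exact this
  let evQ := Ideal.Quotient.liftₐ I ev hev
  have hevQ : ∀ r, evQ (Ideal.Quotient.mk I r) = ev r := fun r => rfl
  let fwd := AdjoinRoot.liftAlgHom p evQ (t : AdjoinRoot (fermatPoly B) ⧸ J)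
    (by simp [hp, hevQ, ev, laurentEval_mono])
  let q : LaurentR →ₐ[ZMod 2] AdjoinRoot p :=
    (AdjoinRoot.ofAlgHom (ZMod 2) p).comp (Ideal.Quotient.mkₐ (ZMod 2) I)
  let y : (AdjoinRoot p)ˣ := Units.map q yUnit
  have hroot : AdjoinRoot.root p ^ B = q (mono 1 0) := by
    change _ = AdjoinRoot.of p (Ideal.Quotient.mk I (mono 1 0))
    have := AdjoinRoot.eval₂_root p
    simpa only [hp, eval₂_sub, eval₂_X_pow, eval₂_C, sub_eq_zero] using this
  obtain ⟨τ, hτ⟩ : IsUnit (AdjoinRoot.root p) := by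
    have : IsUnit (AdjoinRoot.root p ^ B) := hroot ▸ xUnit.isUnit.map q
    exact (isUnit_pow_iff (by omega)).1 this
  set ω : (AdjoinRoot p)ˣ := τ ^ (-(α : ℤ)) * y⁻¹ with hω
  have hy : τ ^ (-(α : ℤ)) * ω⁻¹ = y := by
    rw [hω, mul_inv, inv_inv, mul_inv_cancel_left]
  have hqmono : ∀ i j, q (mono i j) = (((τ ^ B) ^ i * y ^ j : (AdjoinRoot p)ˣ) : AdjoinRoot p) :=
    map_mono q.toRingHom (τ ^ B) y (by simp [hτ, ← hroot]) rfl
  have hqI : ∀ r ∈ I, q r = 0 := fun r hr => by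
    simp [q, Ideal.Quotient.eq_zero_iff_mem.2 hr]
  have hωf : (ω : AdjoinRoot p) ^ B = τ ^ B + 1 := by
    rw [← fBB_relation_iff τ ω α B, hy]
    have := hqI (fBB α (-B)) (Ideal.subset_span (by simp))
    simpa [fBB, hqmono] using this
  have hωg : (ω : AdjoinRoot p) ^ (β + 1) + τ ^ m + τ ^ (m + α) * ω = 0 := by
    rw [← gBB_relation_iff τ ω α β a B m hexp, hy]
    have := hqI (gBB β (-a)) (Ideal.subset_span (by simp))
    simpa [gBB, hqmono] using this
  let bwdE := AdjoinRoot.liftAlgHom (fermatPoly B) (aeval (R := ZMod 2) (τ : AdjoinRoot p)) ω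
    (by simp [eval₂_fermatPoly, hωf])
  have hbwd_t : bwdE tE = τ := by simp [bwdE, htE]
  have hbwd_w : bwdE wE = ω := by simp [bwdE, hwE]
  have hbwd : ∀ r ∈ J, bwdE r = 0 := by
    have : J ≤ RingHom.ker bwdE := by
      rw [hJ, Ideal.span_singleton_le_iff_mem, RingHom.mem_ker]
      simpa [hbwd_t, hbwd_w] using hωg
    exact this
  let bwd := Ideal.Quotient.liftₐ J bwdE hbwd
  have hbwd_mk : ∀ r, bwd (Ideal.Quotient.mk J r) = bwdE r := fun r => rfl
  have hbt : Units.map (bwd : _ →* AdjoinRoot p) t = τ := Units.ext (by simp [ht, hbwd_mk, hbwd_t])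
  have hbw : Units.map (bwd : _ →* AdjoinRoot p) w = ω := Units.ext (by simp [hw, hbwd_mk, hbwd_w])
  have hfτ : Units.map (fwd : _ →* AdjoinRoot (fermatPoly B) ⧸ J) τ = t :=
    Units.ext (by simp [hτ, fwd])
  have hfq : ∀ r, fwd (q r) = ev r := fun r => by simp [fwd, q, hevQ]
  have hfy : Units.map (fwd : _ →* AdjoinRoot (fermatPoly B) ⧸ J) y = t ^ (-(α : ℤ)) * w⁻¹ :=
    Units.ext ((hfq (mono 0 1)).trans (by simp [ev, laurentEval_mono]))
  have hfω : Units.map (fwd : _ →* AdjoinRoot (fermatPoly B) ⧸ J) ω = w := by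
    rw [hω, map_mul, map_zpow, map_inv, hfτ, hfy, mul_inv, inv_inv, mul_inv_cancel_left]
  refine ⟨AlgEquiv.ofAlgHom fwd bwd ?_ ?_⟩
  · refine Ideal.Quotient.algHom_ext _ (AdjoinRoot.algHom_ext' (Polynomial.algHom_ext ?_) ?_)
    · change fwd (bwdE tE) = Ideal.Quotient.mk J tE
      rw [hbwd_t, ← ht, ← hfτ]
      rfl
    · change fwd (bwdE wE) = Ideal.Quotient.mk J wE
      rw [hbwd_w, ← hw, ← hfω]
      rfl
  · refine AdjoinRoot.algHom_ext' (Ideal.Quotient.algHom_ext _ (laurent_algHom_ext ?_ ?_)) ?_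
    · change bwd (fwd (q (mono 1 0))) = q (mono 1 0)
      rw [hfq, laurentEval_mono, hqmono, ← hbt]
      simp
    · change bwd (fwd (q (mono 0 1))) = q (mono 0 1)
      rw [hfq, laurentEval_mono, hqmono, ← hy, ← hbt, ← hbw, zpow_zero, one_mul, zpow_one,
        zpow_zero, one_mul, zpow_one, ← map_zpow, ← map_inv, ← map_mul]
      rfl
    · change bwd (fwd (AdjoinRoot.root p)) = AdjoinRoot.root p
      rw [← hτ]
      conv_rhs => rw [← hbt, ← hfτ]
      rfl

open Polynomial in
theorem finrank_quotient_bb {α β a B m : ℕ} (hB : 1 ≤ B) (hm : 1 ≤ m) (hβ : β < m + α)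
    (hexp : a * B = m + α * (β + 1)) :
    Module.finrank (ZMod 2)
      (LaurentR ⧸ Ideal.span ({fBB α (-B), gBB β (-a)} : Set LaurentR)) = m + α + 1 := by
  obtain ⟨e⟩ := nonempty_algEquiv_adjoinRoot_fermat hB hm hexp
  set Q := LaurentR ⧸ Ideal.span ({fBB α (-B), gBB β (-a)} : Set LaurentR)
  set p : Q[X] := X ^ B - C (Ideal.Quotient.mk _ (mono 1 0)) with hp
  have hmonic : p.Monic := monic_X_pow_sub_C _ (by omega)
  obtain ⟨b, hb⟩ := exists_basis_adjoinRoot_fermatPoly hB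
  have hdim : Module.finrank (ZMod 2) (AdjoinRoot p) = B * (m + α + 1) :=
    e.toLinearEquiv.finrank_eq.trans
      (finrank_quotient_span_fermat hB b _ _ hb (root_fermatPoly_pow B) α β m hβ)
  have : Nontrivial Q := by
    by_contra hQ
    rw [not_nontrivial_iff_subsingleton] at hQ
    have : Subsingleton (AdjoinRoot p) := (AdjoinRoot.mk_surjective (g := p)).subsingleton
    rw [Module.finrank_zero_of_subsingleton] at hdim
    have : 0 < B * (m + α + 1) := by positivity
    omega
  have := hmonic.free_adjoinRoot
  have hrank : Module.finrank Q (AdjoinRoot p) = B := by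
    rw [(AdjoinRoot.powerBasis' hmonic).finrank]
    exact natDegree_X_pow_sub_C
  have htower := Module.finrank_mul_finrank (ZMod 2) Q (AdjoinRoot p)
  rw [hrank, hdim, mul_comm] at htower
  exact Nat.eq_of_mul_eq_mul_left hB htower

/-- If `α ≥ β ≥ 1`, `a, b ≤ 0` and `a·b > α·(β+1)`, the topological index of BB(ᾱ, β̄, a, b) is `Q = a·b − α·β + 1`. -/
theorem bb_index_regime_bottom_left (α β a b : ℤ) (hβ : 1 ≤ β) (hαβ : β ≤ α) (ha : a ≤ 0) (hb : b ≤ 0) (hab : α * (β + 1) < a * b) :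
    (Module.finrank (ZMod 2)
      (LaurentR ⧸ Ideal.span ({fBB α b, gBB β a} : Set LaurentR)) : ℤ) = a * b - α * β + 1 := by
  obtain ⟨α, rfl⟩ := Int.eq_ofNat_of_zero_le (show 0 ≤ α by omega)
  obtain ⟨β, rfl⟩ := Int.eq_ofNat_of_zero_le (show 0 ≤ β by omega)
  obtain ⟨A, hA⟩ := Int.eq_ofNat_of_zero_le (show 0 ≤ -a by omega)
  obtain ⟨B, hB⟩ := Int.eq_ofNat_of_zero_le (show 0 ≤ -b by omega)
  obtain rfl : a = -A := by omega
  obtain rfl : b = -B := by omega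
  rw [neg_mul_neg] at hab ⊢
  have hlt : α * (β + 1) < A * B := by exact_mod_cast hab
  obtain ⟨m, hexp⟩ := Nat.exists_eq_add_of_le' hlt.le
  have hBpos : 1 ≤ B := Nat.one_le_iff_ne_zero.2 (by rintro rfl; simp at hlt)
  rw [finrank_quotient_bb hBpos (by omega) (by omega) hexp]
  have : (A : ℤ) * B = m + α * (β + 1) := by exact_mod_cast hexp
  push_cast
  linear_combination -this
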